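/- Let Ω ⊆ ℝ^d be a bounded open convex set and f : Ω → [0,∞) continuous. A function u : Ω → ℝ is a viscosity solution of the Bellman equation H(D²u, f) = 0 in Ω (i.e. u is upper semicontinuous and for every φ ∈ C²(Ω) such that u − φ attains a local maximum at x ∈ Ω one has H(D²φ(x), f(x)) ≤ 0, and u is lower semicontinuous and for every φ ∈ C²(Ω) such that u − φ attains a local minimum at x ∈ Ω one has H(D²φ(x), f(x)) ≥ 0) if and only if u is convex on Ω and is a viscosity solution of the Monge–Ampère equation M(D²u, f) = 0 on the set of convex functions (i.e. for every convex φ ∈ C²(Ω) such that u − φ attains a local maximum (resp. minimum) at x ∈ Ω one has M(D²φ(x), f(x)) ≤ 0 (resp. ≥ 0)). -/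

import Mathlib

open Matrix Set

/-- The set 𝐒₁ of positive semidefinite symmetric d×d real matrices with unit trace. -/
def S1set (d : ℕ) : Set (Matrix (Fin d) (Fin d) ℝ) :=
  {B | B.PosSemidef ∧ B.trace = 1}

/-- The value −B:A + f·(det B)^(1/d) appearing under the supremum of the Bellman operator. -/
noncomputable def bval (d : ℕ) (A B : Matrix (Fin d) (Fin d) ℝ) (f : ℝ) : ℝ :=
  -((B * A).trace) + f * B.det ^ ((1 : ℝ) / d)

/-- The Bellman operator H(A,f) = sup_{B ∈ 𝐒₁} (−B:A + f·(det B)^(1/d)). -/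
noncomputable def bellman (d : ℕ) (A : Matrix (Fin d) (Fin d) ℝ) (f : ℝ) : ℝ :=
  sSup ((fun B => bval d A B f) '' S1set d)

/-- The Monge–Ampère operator M(A,f) = (f/d)^d − det A. -/
noncomputable def MAop (d : ℕ) (A : Matrix (Fin d) (Fin d) ℝ) (f : ℝ) : ℝ :=
  (f / d) ^ d - A.det

/-- The Hessian matrix D²φ(x) of φ : ℝ^d → ℝ at x. -/
noncomputable def hessianM (d : ℕ) (φ : (Fin d → ℝ) → ℝ) (x : Fin d → ℝ) :
    Matrix (Fin d) (Fin d) ℝ :=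
  fun i j => iteratedFDeriv ℝ 2 φ x ![Pi.single i 1, Pi.single j 1]

lemma psd_amgm {d : ℕ} (hd : 2 ≤ d) {X : Matrix (Fin d) (Fin d) ℝ} (hX : X.PosSemidef) :
    d * X.det ^ ((1 : ℝ) / d) ≤ X.trace := by
  have hd0 : (0 : ℝ) < d := by exact_mod_cast (by omega : 0 < d)
  have hdet : X.det = ∏ i, hX.1.eigenvalues i := by simpa using hX.1.det_eq_prod_eigenvalues
  have htr : X.trace = ∑ i, hX.1.eigenvalues i := by simpa using hX.1.trace_eq_sum_eigenvalues
  have h := Real.geom_mean_le_arith_mean_weighted Finset.univ (fun _ : Fin d => (1 : ℝ) / d)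
    hX.1.eigenvalues (fun i _ => by positivity) (by simp; field_simp)
    (fun i _ => hX.eigenvalues_nonneg i)
  rw [Real.finsetProd_rpow _ _ (fun i _ => hX.eigenvalues_nonneg i), ← hdet,
    ← Finset.mul_sum, ← htr] at h
  calc d * X.det ^ ((1 : ℝ) / d) ≤ d * (1 / d * X.trace) := by gcongr
    _ = X.trace := by field_simp

lemma psd_amgm2 {d : ℕ} (hd : 2 ≤ d) {A B : Matrix (Fin d) (Fin d) ℝ} (hA : A.PosSemidef)
    (hB : B.PosSemidef) :
    d * (A.det ^ ((1 : ℝ) / d) * B.det ^ ((1 : ℝ) / d)) ≤ (B * A).trace := by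
  have hA0 := hA.det_nonneg
  have hB0 := hB.det_nonneg
  obtain ⟨C, rfl⟩ : ∃ C : Matrix (Fin d) (Fin d) ℝ, A = Cᴴ * C := by
    open scoped MatrixOrder in
    exact CStarAlgebra.nonneg_iff_eq_star_mul_self.mp hA.nonneg
  have h := psd_amgm hd (hB.mul_mul_conjTranspose_same C)
  have e1 : (C * B * Cᴴ).trace = (B * (Cᴴ * C)).trace := by
    rw [Matrix.mul_assoc, Matrix.trace_mul_comm, Matrix.mul_assoc]
  have e2 : (C * B * Cᴴ).det = (Cᴴ * C).det * B.det := by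
    simp only [Matrix.det_mul]; ring
  rw [e1, e2, Real.mul_rpow hA0 hB0] at h
  exact h

lemma psd_tr {d : ℕ} (hd : 2 ≤ d) {A B : Matrix (Fin d) (Fin d) ℝ} (hA : A.PosSemidef)
    (hB : B.PosSemidef) : 0 ≤ (B * A).trace := by
  refine le_trans ?_ (psd_amgm2 hd hA hB)
  have := hA.det_nonneg
  have := hB.det_nonneg
  positivity

lemma psd_entry {d : ℕ} {B : Matrix (Fin d) (Fin d) ℝ} (hB : B ∈ S1set d) (i j : Fin d) :
    |B i j| ≤ 1 := by
  obtain ⟨hP, ht⟩ := hB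
  have hdiag : ∀ i, B i i ≤ 1 := fun i => by
    rw [← ht]
    exact Finset.single_le_sum (f := fun i => B i i) (fun i _ => hP.diag_nonneg) (Finset.mem_univ i)
  have hs : B j i = B i j := by simpa using hP.1.apply i j
  have h1 := hP.dotProduct_mulVec_nonneg (Pi.single i 1 + Pi.single j 1)
  have h2 := hP.dotProduct_mulVec_nonneg (Pi.single i 1 - Pi.single j 1)
  simp [Matrix.mulVec_add, Matrix.mulVec_sub, hs] at h1 h2
  have := hdiag i
  have := hdiag j
  rw [abs_le]
  constructor <;> linarith

lemma bval_bdd {d : ℕ} (hd : 2 ≤ d) (A : Matrix (Fin d) (Fin d) ℝ) (f : ℝ) :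
    BddAbove ((fun B => bval d A B f) '' S1set d) := by
  refine ⟨(∑ i, ∑ j, |A j i|) + |f|, ?_⟩
  rintro _ ⟨B, hB, rfl⟩
  have hd2 : (2 : ℝ) ≤ d := by exact_mod_cast hd
  have h0 : 0 ≤ B.det ^ ((1 : ℝ) / d) := Real.rpow_nonneg hB.1.det_nonneg _
  have h1 : B.det ^ ((1 : ℝ) / d) ≤ 1 := by
    have := psd_amgm hd hB.1
    rw [hB.2] at this
    nlinarith
  have h2 : f * B.det ^ ((1 : ℝ) / d) ≤ |f| := by
    have := le_abs_self f
    have := abs_nonneg f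
    nlinarith
  have h3 : -(B * A).trace ≤ ∑ i, ∑ j, |A j i| := by
    simp only [Matrix.trace, Matrix.diag, Matrix.mul_apply, ← Finset.sum_neg_distrib]
    gcongr with i _ j _
    have := psd_entry hB i j
    calc -(B i j * A j i) ≤ |B i j * A j i| := neg_le_abs _
      _ = |B i j| * |A j i| := abs_mul _ _
      _ ≤ 1 * |A j i| := by gcongr
      _ = _ := one_mul _
  simp only [bval]
  linarith

/-- rank one element -/
lemma vv_mem {d : ℕ} {v : Fin d → ℝ} (hv : v ≠ 0) :
    ((v ⬝ᵥ v)⁻¹ • Matrix.vecMulVec v v) ∈ S1set d := by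
  have h0 : 0 < v ⬝ᵥ v := by
    have := Matrix.dotProduct_star_self_pos_iff.2 hv
    simpa using this
  refine ⟨?_, ?_⟩
  · have := Matrix.posSemidef_vecMulVec_self_star v
    simp only [star_trivial] at this
    exact this.smul (by positivity)
  · rw [Matrix.trace_smul, Matrix.trace_vecMulVec, smul_eq_mul]
    field_simp

lemma vv_bval {d : ℕ} (hd : 2 ≤ d) (A : Matrix (Fin d) (Fin d) ℝ) (f : ℝ) (v : Fin d → ℝ) :
    bval d A ((v ⬝ᵥ v)⁻¹ • Matrix.vecMulVec v v) f = - (v ⬝ᵥ v)⁻¹ * (v ⬝ᵥ A *ᵥ v) := by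
  have hdet : ((v ⬝ᵥ v)⁻¹ • Matrix.vecMulVec v v).det = 0 := by
    have : Nontrivial (Fin d) := Fin.nontrivial_iff_two_le.2 hd
    rw [Matrix.det_smul, Matrix.det_vecMulVec]; simp
  have hd0 : (1 : ℝ) / d ≠ 0 := by
    have : (d : ℝ) ≠ 0 := by exact_mod_cast (by omega : d ≠ 0)
    positivity
  unfold bval
  rw [hdet, Real.zero_rpow hd0, Matrix.smul_mul, Matrix.trace_smul, Matrix.trace_mul_comm,
    Matrix.mul_vecMulVec, Matrix.trace_vecMulVec, dotProduct_comm (A *ᵥ v) v]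
  simp

lemma S1_ne {d : ℕ} (hd : 2 ≤ d) : (S1set d).Nonempty := by
  have : Nonempty (Fin d) := ⟨⟨0, by omega⟩⟩
  exact ⟨_, vv_mem (v := fun _ => 1) (fun h => by simpa using congrFun h (Classical.arbitrary _))⟩

lemma bellman_le_iff {d : ℕ} (hd : 2 ≤ d) (A : Matrix (Fin d) (Fin d) ℝ) (f c : ℝ) :
    bellman d A f ≤ c ↔ ∀ B ∈ S1set d, bval d A B f ≤ c := by
  unfold bellman
  rw [csSup_le_iff (bval_bdd hd A f) ((S1_ne hd).image _)]
  simp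

lemma bellman_ge {d : ℕ} (hd : 2 ≤ d) (A : Matrix (Fin d) (Fin d) ℝ) (f : ℝ) {B} 
    (hB : B ∈ S1set d) : bval d A B f ≤ bellman d A f :=
  (bellman_le_iff hd A f _).1 le_rfl B hB

lemma bval_shift {d : ℕ} (A : Matrix (Fin d) (Fin d) ℝ) (f ε : ℝ) {B} (hB : B ∈ S1set d) :
    bval d (A + ε • 1) B f = bval d A B f - ε := by
  simp [bval, Matrix.mul_add, hB.2]; ring

lemma bellman_shift {d : ℕ} (hd : 2 ≤ d) (A : Matrix (Fin d) (Fin d) ℝ) (f ε c : ℝ) :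
    bellman d (A + ε • 1) f ≤ c ↔ bellman d A f ≤ c + ε := by
  rw [bellman_le_iff hd, bellman_le_iff hd]
  refine forall₂_congr fun B hB => ?_
  rw [bval_shift A f ε hB, sub_le_iff_le_add]

lemma psd_of_bellman {d : ℕ} (hd : 2 ≤ d) {A : Matrix (Fin d) (Fin d) ℝ} (hA : A.IsHermitian)
    {f : ℝ} (h : bellman d A f ≤ 0) : A.PosSemidef := by
  refine .of_dotProduct_mulVec_nonneg hA fun v => ?_
  rcases eq_or_ne v 0 with rfl | hv
  · simp
  have h0 : 0 < v ⬝ᵥ v := by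
    have := Matrix.dotProduct_star_self_pos_iff.2 hv
    simpa using this
  have h1 := (bellman_ge hd A f (vv_mem hv)).trans h
  rw [vv_bval hd, neg_mul, neg_nonpos] at h1
  simpa using (mul_nonneg_iff_of_pos_left (inv_pos.2 h0)).1 h1

/-- optimal matrix for positive definite A -/
lemma pd_opt {d : ℕ} (hd : 2 ≤ d) {A : Matrix (Fin d) (Fin d) ℝ} (hA : A.PosDef) (f : ℝ) :
    ∃ t > 0, ∃ B ∈ S1set d, bval d A B f = t * (f / A.det ^ ((1 : ℝ) / d) - d) := by
  have : Nonempty (Fin d) := ⟨⟨0, by omega⟩⟩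
  have hd0 : (d : ℝ) ≠ 0 := by exact_mod_cast (by omega : d ≠ 0)
  have ht : 0 < (A⁻¹).trace := hA.inv.trace_pos
  have hdet := hA.det_pos
  refine ⟨(A⁻¹.trace)⁻¹, by positivity, (A⁻¹.trace)⁻¹ • A⁻¹,
    ⟨hA.inv.posSemidef.smul (by positivity), ?_⟩, ?_⟩
  · rw [Matrix.trace_smul, smul_eq_mul]; field_simp
  · have hinv : A⁻¹ * A = 1 := Matrix.nonsing_inv_mul _ (isUnit_iff_ne_zero.2 hdet.ne')
    have e : ((A⁻¹.trace)⁻¹ ^ d) ^ ((1 : ℝ) / d) = (A⁻¹.trace)⁻¹ := by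
      rw [one_div, Real.pow_rpow_inv_natCast (by positivity) (by omega)]
    unfold bval
    rw [Matrix.smul_mul, hinv, Matrix.trace_smul, Matrix.trace_one, Matrix.det_smul,
      Real.mul_rpow (by positivity) hA.inv.det_pos.le, Fintype.card_fin, e,
      Matrix.det_nonsing_inv, Ring.inverse_eq_inv', Real.inv_rpow hdet.le, smul_eq_mul]
    field_simp
    ring

lemma root_le {d : ℕ} (hd : 2 ≤ d) {f D : ℝ} (hf : 0 ≤ f) (hD : 0 ≤ D) :
    f ≤ d * D ^ ((1 : ℝ) / d) ↔ (f / d) ^ d ≤ D := by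
  have hd0 : (0 : ℝ) < d := by exact_mod_cast (by omega : 0 < d)
  have : 0 ≤ D ^ ((1 : ℝ) / d) := by positivity
  have e : (D ^ ((1 : ℝ) / d)) ^ d = D := by
    rw [one_div, Real.rpow_inv_natCast_pow hD (by omega)]
  rw [← div_le_iff₀' hd0]
  conv_rhs => rw [← e]
  rw [pow_le_pow_iff_left₀ (by positivity) (by positivity) (by omega)]

/-- F2, backwards -/
lemma bellman_le_of_MA {d : ℕ} (hd : 2 ≤ d) {A : Matrix (Fin d) (Fin d) ℝ} (hA : A.PosSemidef)
    {f : ℝ} (hf : 0 ≤ f) (h : MAop d A f ≤ 0) : bellman d A f ≤ 0 := by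
  rw [bellman_le_iff hd]
  intro B hB
  have h1 : f ≤ d * A.det ^ ((1 : ℝ) / d) :=
    (root_le hd hf hA.det_nonneg).2 (by unfold MAop at h; linarith)
  have h2 := psd_amgm2 hd hA hB.1
  have h3 : 0 ≤ B.det ^ ((1 : ℝ) / d) := Real.rpow_nonneg hB.1.det_nonneg _
  unfold bval
  nlinarith

lemma MA_le_of_bellman_pd {d : ℕ} (hd : 2 ≤ d) {A : Matrix (Fin d) (Fin d) ℝ} (hA : A.PosDef)
    {f : ℝ} (hf : 0 ≤ f) (h : bellman d A f ≤ 0) : (f / d) ^ d ≤ A.det := by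
  obtain ⟨t, ht, B, hB, e⟩ := pd_opt hd hA f
  have h1 := (bellman_ge hd A f hB).trans h
  rw [e] at h1
  have h2 : f / A.det ^ ((1 : ℝ) / d) - d ≤ 0 := by
    by_contra! h2
    nlinarith [mul_pos ht h2]
  have h3 : 0 < A.det ^ ((1 : ℝ) / d) := Real.rpow_pos_of_pos hA.det_pos _
  rw [← root_le hd hf hA.det_pos.le, ← div_le_iff₀ h3]
  linarith

lemma MA_le_of_bellman {d : ℕ} (hd : 2 ≤ d) {A : Matrix (Fin d) (Fin d) ℝ} (hA : A.IsHermitian)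
    {f : ℝ} (hf : 0 ≤ f) (h : bellman d A f ≤ 0) : MAop d A f ≤ 0 := by
  have hP := psd_of_bellman hd hA h
  have key : ∀ ε > (0 : ℝ), (f / d) ^ d ≤ (A + ε • 1).det := fun ε hε => by
    refine MA_le_of_bellman_pd hd ?_ hf ?_
    · exact Matrix.PosDef.posSemidef_add hP (Matrix.PosDef.one.smul hε)
    · rw [bellman_shift hd]; linarith
  have hc : Continuous fun ε : ℝ => (A + ε • (1 : Matrix (Fin d) (Fin d) ℝ)).det := by fun_prop
  have ht : Filter.Tendsto (fun ε : ℝ => (A + ε • (1 : Matrix (Fin d) (Fin d) ℝ)).det)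
      (nhdsWithin 0 (Ioi 0)) (nhds A.det) := by
    have := (hc.tendsto 0).mono_left (nhdsWithin_le_nhds (s := Ioi 0))
    simpa using this
  have := ge_of_tendsto ht (Filter.eventually_of_mem self_mem_nhdsWithin fun ε hε => key ε hε)
  unfold MAop
  linarith

lemma pd_lam {d : ℕ} (hd : 2 ≤ d) {A : Matrix (Fin d) (Fin d) ℝ} (hA : A.PosDef) :
    ∃ l : ℝ, 0 < l ∧ (A - l • 1).PosSemidef := by
  have : Nonempty (Fin d) := ⟨⟨0, by omega⟩⟩
  obtain ⟨i, hi⟩ := Finite.exists_min hA.1.eigenvalues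
  refine ⟨hA.1.eigenvalues i, hA.eigenvalues_pos i, ?_⟩
  rw [Matrix.posSemidef_iff_isHermitian_and_spectrum_nonneg]
  refine ⟨hA.1.sub (Matrix.isHermitian_one.smul (IsSelfAdjoint.all _)), fun a ha => ?_⟩
  have e : A - hA.1.eigenvalues i • 1 = A - algebraMap ℝ _ (hA.1.eigenvalues i) := by
    rw [Algebra.algebraMap_eq_smul_one]
  rw [e, ← spectrum.sub_singleton_eq, hA.1.spectrum_real_eq_range_eigenvalues] at ha
  obtain ⟨_, ⟨j, rfl⟩, _, rfl, rfl⟩ := ha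
  simpa using hi j

/-- F3 forward -/
lemma MA_ge_of_bellman {d : ℕ} (hd : 2 ≤ d) {A : Matrix (Fin d) (Fin d) ℝ} (hA : A.PosSemidef)
    {f : ℝ} (hf : 0 ≤ f) (h : 0 ≤ bellman d A f) : 0 ≤ MAop d A f := by
  by_contra! hlt
  unfold MAop at hlt
  have hd0 : (0 : ℝ) < d := by exact_mod_cast (by omega : 0 < d)
  have hdet : 0 < A.det := by
    have : 0 ≤ (f / d) ^ d := by positivity
    linarith
  have hPD : A.PosDef := hA.posDef_iff_det_ne_zero.2 hdet.ne'
  obtain ⟨l, hl, hAl⟩ := pd_lam hd hPD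
  set r := A.det ^ ((1 : ℝ) / d) with hr
  have hr0 : 0 < r := Real.rpow_pos_of_pos hdet _
  have e : r ^ d = A.det := by
    rw [hr, one_div, Real.rpow_inv_natCast_pow hdet.le (by omega)]
  have hfr : f / d < r := by
    by_contra! hc
    have := pow_le_pow_left₀ hr0.le hc d
    linarith
  have hfr' : f < d * r := by rwa [div_lt_iff₀' hd0] at hfr
  have : bellman d A f ≤ -((1 - f / (d * r)) * l) := by
    rw [bellman_le_iff hd]
    intro B hB
    have h1 := psd_amgm2 hd hA hB.1
    have h2 := psd_tr hd hAl hB.1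
    rw [Matrix.mul_sub, Matrix.trace_sub, Matrix.mul_smul, Matrix.trace_smul, Matrix.mul_one,
      hB.2, smul_eq_mul, mul_one] at h2
    have h3 : f / (d * r) < 1 := by rw [div_lt_one (by positivity)]; exact hfr'
    have h4 : f * B.det ^ ((1 : ℝ) / d) ≤ f / (d * r) * (B * A).trace := by
      calc f * B.det ^ ((1 : ℝ) / d) = f / (d * r) * (d * (r * B.det ^ ((1 : ℝ) / d))) := by
            field_simp
        _ ≤ _ := by gcongr
    unfold bval
    nlinarith
  have h3 : f / (d * r) < 1 := by rw [div_lt_one (by positivity)]; exact hfr'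
  nlinarith [mul_pos (sub_pos.2 h3) hl]

/-- F3 backward -/
lemma bellman_ge_of_MA {d : ℕ} (hd : 2 ≤ d) {A : Matrix (Fin d) (Fin d) ℝ} (hA : A.PosSemidef)
    {f : ℝ} (h : 0 ≤ MAop d A f) (hf : 0 ≤ f) : 0 ≤ bellman d A f := by
  by_cases hdet : A.det = 0
  · obtain ⟨v, hv, hv0⟩ := Matrix.exists_mulVec_eq_zero_iff.2 hdet
    have := bellman_ge hd A f (vv_mem hv)
    rw [vv_bval hd, hv0] at this
    simpa using this
  · have hPD : A.PosDef := hA.posDef_iff_det_ne_zero.2 hdet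
    obtain ⟨t, ht, B, hB, e⟩ := pd_opt hd hPD f
    refine le_trans ?_ (bellman_ge hd A f hB)
    rw [e]
    have hd0 : (0 : ℝ) < d := by exact_mod_cast (by omega : 0 < d)
    set r := A.det ^ ((1 : ℝ) / d) with hr
    have hr0 : 0 < r := Real.rpow_pos_of_pos hPD.det_pos _
    have e : r ^ d = A.det := by
      rw [hr, one_div, Real.rpow_inv_natCast_pow hPD.det_pos.le (by omega)]
    have h1 : r ≤ f / d := by
      unfold MAop at h
      by_contra! hc
      have := pow_lt_pow_left₀ hc (by positivity) (by omega : d ≠ 0)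
      linarith
    have h2 : (d : ℝ) ≤ f / r := by
      rw [le_div_iff₀ hr0]; rw [le_div_iff₀ hd0] at h1; linarith
    exact mul_nonneg ht.le (by linarith)

lemma hess_herm {d : ℕ} {φ : (Fin d → ℝ) → ℝ} {x : Fin d → ℝ} (hφ : ContDiffAt ℝ 2 φ x) :
    (hessianM d φ x).IsHermitian := by
  have hs : IsSymmSndFDerivAt ℝ φ x := hφ.isSymmSndFDerivAt (by simp)
  ext i j
  simp only [Matrix.conjTranspose_apply, hessianM, iteratedFDeriv_two_apply, star_trivial]
  exact hs _ _

lemma hess_quad {d : ℕ} (φ : (Fin d → ℝ) → ℝ) (x v : Fin d → ℝ) :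
    v ⬝ᵥ hessianM d φ x *ᵥ v = fderiv ℝ (fderiv ℝ φ) x v v := by
  have hv : v = ∑ i, v i • (Pi.single i 1 : Fin d → ℝ) := by
    ext j; simp [Finset.sum_apply, Pi.single_apply]
  conv_rhs => rw [hv]
  simp only [map_sum, map_smul, _root_.sum_apply, _root_.smul_apply,
    dotProduct, Matrix.mulVec, hessianM, iteratedFDeriv_two_apply, smul_eq_mul, Finset.mul_sum]
  rw [Finset.sum_comm]
  refine Finset.sum_congr rfl fun i _ => Finset.sum_congr rfl fun j _ => ?_
  simp
  ring

lemma norm_sq_le_dot {d : ℕ} (h : Fin d → ℝ) : ‖h‖ ^ 2 ≤ h ⬝ᵥ h := by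
  have h0 : 0 ≤ h ⬝ᵥ h := Finset.sum_nonneg fun i _ => mul_self_nonneg _
  have : ‖h‖ ≤ Real.sqrt (h ⬝ᵥ h) := by
    rw [pi_norm_le_iff_of_nonneg (Real.sqrt_nonneg _)]
    intro i
    apply Real.le_sqrt_of_sq_le
    rw [Real.norm_eq_abs, sq_abs, sq]
    exact Finset.single_le_sum (f := fun i => h i * h i) (fun i _ => mul_self_nonneg _)
      (Finset.mem_univ i)
  calc ‖h‖ ^ 2 ≤ Real.sqrt (h ⬝ᵥ h) ^ 2 := by gcongr
    _ = _ := Real.sq_sqrt h0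

lemma taylor2 {d : ℕ} {φ : (Fin d → ℝ) → ℝ} {x : Fin d → ℝ} (hφ : ContDiffAt ℝ 2 φ x)
    {ε : ℝ} (hε : 0 < ε) :
    ∀ᶠ y in nhds x, |φ y - φ x - fderiv ℝ φ x (y - x)
      - (1/2) * ((y - x) ⬝ᵥ hessianM d φ x *ᵥ (y - x))| ≤ ε * ((y - x) ⬝ᵥ (y - x)) := by
  have hs : IsSymmSndFDerivAt ℝ φ x := hφ.isSymmSndFDerivAt (by simp)
  have hev : ∀ᶠ y in nhds x, ContDiffAt ℝ 2 φ y := hφ.eventually (by simp)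
  obtain ⟨r, hr, hball⟩ := Metric.eventually_nhds_iff_ball.1 hev
  have hD : DifferentiableAt ℝ (fderiv ℝ φ) x :=
    (hφ.fderiv_right (m := 1) (by norm_num)).differentiableAt (by simp)
  set D := fderiv ℝ (fderiv ℝ φ) x with hDdef
  let g : (Fin d → ℝ) → ℝ := fun y => φ y - φ x - fderiv ℝ φ x (y - x) - (1/2) * D (y - x) (y - x)
  let g' : (Fin d → ℝ) → ((Fin d → ℝ) →L[ℝ] ℝ) := fun y =>
    fderiv ℝ φ y - fderiv ℝ φ x - D (y - x)
  have hg : ∀ y ∈ Metric.ball x r, HasFDerivWithinAt g (g' y) (Metric.ball x r) y := by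
    intro y hy
    have h1 : HasFDerivAt φ (fderiv ℝ φ y) y :=
      ((hball y hy).differentiableAt (by simp)).hasFDerivAt
    have h2 : HasFDerivAt (fun y : Fin d → ℝ => y - x) (ContinuousLinearMap.id ℝ _) y :=
      (hasFDerivAt_id y).sub_const x
    have h3 : HasFDerivAt (fun y => fderiv ℝ φ x (y - x)) (fderiv ℝ φ x) y :=
      (fderiv ℝ φ x).hasFDerivAt.comp y h2
    have h4 : HasFDerivAt (fun y => D (y - x)) D y := D.hasFDerivAt.comp y h2
    have h5 := h4.clm_apply h2
    have h6 := ((h1.sub_const (φ x)).sub h3).sub (h5.const_mul (1/2))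
    refine HasFDerivAt.hasFDerivWithinAt ?_
    refine h6.congr_fderiv ?_
    ext w
    have := hs w (y - x)
    rw [← hDdef] at this
    simp only [map_sub, _root_.sub_apply] at this
    simp [g']
    linarith
  have hg' : g' =o[nhdsWithin x (Metric.ball x r)] fun y => ‖y - x‖ ^ 1 := by
    have := hD.hasFDerivAt.isLittleO
    simp only [pow_one]
    exact (this.mono nhdsWithin_le_nhds).norm_right
  have key := (convex_ball x r).isLittleO_pow_succ (Metric.mem_ball_self hr) hg hg'
  rw [nhdsWithin_eq_nhds.2 (Metric.ball_mem_nhds x hr)] at key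
  filter_upwards [key.def hε] with y hy
  have e : g x = 0 := by simp [g]
  rw [e, sub_zero, Real.norm_eq_abs, norm_pow, norm_norm] at hy
  rw [hess_quad]
  calc _ ≤ _ := hy
    _ ≤ _ := by gcongr; exact norm_sq_le_dot _

lemma second_diff {d : ℕ} {φ : (Fin d → ℝ) → ℝ} {x : Fin d → ℝ} (hφ : ContDiffAt ℝ 2 φ x)
    (v : Fin d → ℝ) :
    Filter.Tendsto (fun t : ℝ => (φ (x + t • v) + φ (x - t • v) - 2 * φ x) / t ^ 2)
      (nhdsWithin 0 (Ioi 0)) (nhds (v ⬝ᵥ hessianM d φ x *ᵥ v)) := by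
  rw [Metric.tendsto_nhds]
  intro ε hε
  have h0 : 0 ≤ v ⬝ᵥ v := Finset.sum_nonneg fun i _ => mul_self_nonneg _
  set η := ε / (2 * (v ⬝ᵥ v) + 1) / 2 with hη
  have hη0 : 0 < η := by positivity
  have hη1 : 2 * η * (v ⬝ᵥ v) < ε := by
    rw [hη]
    have : (2 * (v ⬝ᵥ v) + 1) * (ε / (2 * (v ⬝ᵥ v) + 1)) = ε := by field_simp
    nlinarith [div_pos hε (by positivity : 0 < 2 * (v ⬝ᵥ v) + 1)]
  have hT := taylor2 hφ hη0
  have c1 : Filter.Tendsto (fun t : ℝ => x + t • v) (nhdsWithin 0 (Ioi 0)) (nhds x) := by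
    have : Continuous fun t : ℝ => x + t • v := by fun_prop
    simpa using (this.tendsto 0).mono_left (nhdsWithin_le_nhds (s := Ioi 0))
  have c2 : Filter.Tendsto (fun t : ℝ => x - t • v) (nhdsWithin 0 (Ioi 0)) (nhds x) := by
    have : Continuous fun t : ℝ => x - t • v := by fun_prop
    simpa using (this.tendsto 0).mono_left (nhdsWithin_le_nhds (s := Ioi 0))
  filter_upwards [c1.eventually hT, c2.eventually hT, self_mem_nhdsWithin] with t h1 h2 ht
  have ht0 : 0 < t := ht
  have e1 : x + t • v - x = t • v := by abel
  have e2 : x - t • v - x = -(t • v) := by abel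
  rw [e1] at h1
  rw [e2] at h2
  simp only [Matrix.mulVec_smul, dotProduct_smul, smul_dotProduct, smul_eq_mul, map_smul, map_neg,
    Matrix.mulVec_neg, neg_dotProduct, dotProduct_neg, neg_neg] at h1 h2
  rw [Real.dist_eq]
  refine lt_of_le_of_lt ?_ hη1
  rw [abs_le] at h1 h2 ⊢
  constructor
  · rw [neg_le_sub_iff_le_add, ← sub_le_iff_le_add, le_div_iff₀ (by positivity)]
    nlinarith
  · rw [sub_le_iff_le_add, div_le_iff₀ (by positivity)]
    nlinarith

lemma psd_of_sd {d : ℕ} {φ : (Fin d → ℝ) → ℝ} {x : Fin d → ℝ} (hφ : ContDiffAt ℝ 2 φ x)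
    (h : ∀ v : Fin d → ℝ, ∀ᶠ t : ℝ in nhdsWithin 0 (Ioi 0),
      0 ≤ φ (x + t • v) + φ (x - t • v) - 2 * φ x) : (hessianM d φ x).PosSemidef := by
  refine .of_dotProduct_mulVec_nonneg (hess_herm hφ) fun v => ?_
  rw [star_trivial]
  refine ge_of_tendsto (second_diff hφ v) ?_
  filter_upwards [h v] with t ht
  positivity

/-- second differences of a convex function -/
lemma convex_sd {d : ℕ} {Ω : Set (Fin d → ℝ)} (hΩo : IsOpen Ω) {u : (Fin d → ℝ) → ℝ}
    (hu : ConvexOn ℝ Ω u) {x : Fin d → ℝ} (hx : x ∈ Ω) {P : (Fin d → ℝ) → Prop}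
    (hP : ∀ᶠ y in nhds x, P y) (v : Fin d → ℝ) :
    ∀ᶠ t : ℝ in nhdsWithin 0 (Ioi 0),
      0 ≤ u (x + t • v) + u (x - t • v) - 2 * u x ∧ P (x + t • v) ∧ P (x - t • v) := by
  have hT := (hΩo.mem_nhds hx)
  have c1 : Filter.Tendsto (fun t : ℝ => x + t • v) (nhdsWithin 0 (Ioi 0)) (nhds x) := by
    have : Continuous fun t : ℝ => x + t • v := by fun_prop
    simpa using (this.tendsto 0).mono_left (nhdsWithin_le_nhds (s := Ioi 0))
  have c2 : Filter.Tendsto (fun t : ℝ => x - t • v) (nhdsWithin 0 (Ioi 0)) (nhds x) := by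
    have : Continuous fun t : ℝ => x - t • v := by fun_prop
    simpa using (this.tendsto 0).mono_left (nhdsWithin_le_nhds (s := Ioi 0))
  filter_upwards [c1.eventually hT, c2.eventually hT, c1.eventually hP, c2.eventually hP]
    with t h1 h2 h3 h4
  refine ⟨?_, h3, h4⟩
  have := hu.2 h1 h2 (by norm_num : (0:ℝ) ≤ 1/2) (by norm_num : (0:ℝ) ≤ 1/2) (by norm_num)
  have e : (1/2 : ℝ) • (x + t • v) + (1/2 : ℝ) • (x - t • v) = x := by
    ext i; simp; ring
  rw [e] at this
  simp only [smul_eq_mul] at this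
  linarith

/-- The quadratic test function. -/
noncomputable def qfun (d : ℕ) (a : ℝ) (L : (Fin d → ℝ) →L[ℝ] ℝ) (A : Matrix (Fin d) (Fin d) ℝ)
    (x : Fin d → ℝ) : (Fin d → ℝ) → ℝ :=
  fun y => a + L (y - x) + (1/2) * ((y - x) ⬝ᵥ A *ᵥ (y - x))

lemma qfun_contDiff (d : ℕ) (a : ℝ) (L : (Fin d → ℝ) →L[ℝ] ℝ) (A : Matrix (Fin d) (Fin d) ℝ)
    (x : Fin d → ℝ) : ContDiff ℝ 2 (qfun d a L A x) := by
  unfold qfun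
  simp only [dotProduct, Matrix.mulVec]
  fun_prop

lemma qfun_hess {d : ℕ} (a : ℝ) (L : (Fin d → ℝ) →L[ℝ] ℝ) {A : Matrix (Fin d) (Fin d) ℝ}
    (hA : A.IsHermitian) (x : Fin d → ℝ) : hessianM d (qfun d a L A x) x = A := by
  have hc : ContDiffAt ℝ 2 (qfun d a L A x) x := (qfun_contDiff d a L A x).contDiffAt
  have hH := hess_herm hc
  have hq : ∀ v, v ⬝ᵥ hessianM d (qfun d a L A x) x *ᵥ v = v ⬝ᵥ A *ᵥ v := fun v => by
    refine tendsto_nhds_unique (second_diff hc v) ?_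
    refine Filter.Tendsto.congr' ?_ tendsto_const_nhds
    filter_upwards [self_mem_nhdsWithin] with t ht
    have ht0 : (t : ℝ) ≠ 0 := ne_of_gt ht
    have e1 : x + t • v - x = t • v := by abel
    have e2 : x - t • v - x = -(t • v) := by abel
    simp only [qfun, e1, e2, sub_self]
    simp [Matrix.mulVec_smul, Matrix.mulVec_neg]
    field_simp
    ring
  set H := hessianM d (qfun d a L A x) x
  ext i j
  have hs : H j i = H i j := by simpa using hH.apply i j
  have hs' : A j i = A i j := by simpa using hA.apply i j
  have h1 := hq (Pi.single i 1 + Pi.single j 1)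
  have h2 := hq (Pi.single i 1)
  have h3 := hq (Pi.single j 1)
  simp [Matrix.mulVec_add, hs, hs'] at h1 h2 h3
  linarith

lemma qfun_convex {d : ℕ} (a : ℝ) (L : (Fin d → ℝ) →L[ℝ] ℝ) {A : Matrix (Fin d) (Fin d) ℝ}
    (hA : A.PosSemidef) (x : Fin d → ℝ) {Ω : Set (Fin d → ℝ)} (hΩ : Convex ℝ Ω) :
    ConvexOn ℝ Ω (qfun d a L A x) := by
  refine ⟨hΩ, fun y _ z _ α β hα hβ hαβ => ?_⟩
  have h := hA.dotProduct_mulVec_nonneg ((y - x) - (z - x))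
  rw [star_trivial] at h
  have e : α • y + β • z - x = α • (y - x) + β • (z - x) := by
    have : x = (α + β) • x := by rw [hαβ, one_smul]
    conv_lhs => rw [this]
    module
  unfold qfun
  rw [e]
  generalize y - x = p at *
  generalize z - x = q at *
  simp only [Matrix.mulVec_add, Matrix.mulVec_sub, Matrix.mulVec_smul, dotProduct_add,
    add_dotProduct, sub_dotProduct, dotProduct_sub, smul_dotProduct, dotProduct_smul, smul_eq_mul,
    map_add, map_smul] at h ⊢
  generalize p ⬝ᵥ A *ᵥ p = pp at *
  generalize p ⬝ᵥ A *ᵥ q = pq at *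
  generalize q ⬝ᵥ A *ᵥ p = qp at *
  generalize q ⬝ᵥ A *ᵥ q = qq at *
  obtain rfl : β = 1 - α := by linarith
  nlinarith [mul_nonneg (mul_nonneg hα hβ) h]

lemma qfun_touch {d : ℕ} {φ : (Fin d → ℝ) → ℝ} {x : Fin d → ℝ} (hφ : ContDiffAt ℝ 2 φ x)
    {ε : ℝ} (hε : 0 < ε) :
    (∀ᶠ y in nhds x, φ y ≤ qfun d (φ x) (fderiv ℝ φ x) (hessianM d φ x + ε • 1) x y) ∧
    (∀ᶠ y in nhds x, qfun d (φ x) (fderiv ℝ φ x) (hessianM d φ x + (-ε) • 1) x y ≤ φ y) := by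
  have := taylor2 hφ (half_pos hε)
  constructor <;> filter_upwards [this] with y hy <;> rw [abs_le] at hy <;>
    simp only [qfun, Matrix.add_mulVec, Matrix.smul_mulVec, Matrix.one_mulVec, dotProduct_add,
      dotProduct_smul, smul_eq_mul] <;> linarith [hy.1, hy.2]

lemma qfun_self {d : ℕ} (a : ℝ) (L : (Fin d → ℝ) →L[ℝ] ℝ) (A : Matrix (Fin d) (Fin d) ℝ)
    (x : Fin d → ℝ) : qfun d a L A x x = a := by simp [qfun]

lemma convex_of_sub {d : ℕ} {Ω : Set (Fin d → ℝ)} (hΩo : IsOpen Ω)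
    (hΩb : Bornology.IsBounded Ω) (hΩc : Convex ℝ Ω) {u : (Fin d → ℝ) → ℝ}
    (hu : ContinuousOn u Ω)
    (hsub : ∀ φ : (Fin d → ℝ) → ℝ, ContDiffOn ℝ 2 φ Ω →
        ∀ x ∈ Ω, IsLocalMaxOn (fun y => u y - φ y) Ω x → (hessianM d φ x).PosSemidef) :
    ConvexOn ℝ Ω u := by
  refine ⟨hΩc, fun x hx y hy a b ha hb hab => ?_⟩
  by_contra! hlt
  simp only [smul_eq_mul] at hlt
  have hxy : y - x ≠ 0 := by
    intro h
    obtain rfl : y = x := sub_eq_zero.1 h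
    rw [← add_smul, ← add_mul, hab] at hlt
    simp at hlt
  set e := y - x with he
  have hE : 0 < e ⬝ᵥ e := by
    simpa using Matrix.dotProduct_star_self_pos_iff.2 hxy
  obtain ⟨S, hS⟩ : ∃ S : (Fin d → ℝ) → ℝ, S = fun p => (e ⬝ᵥ e)⁻¹ * ((p - x) ⬝ᵥ e) := ⟨_, rfl⟩
  obtain ⟨R, hR⟩ : ∃ R : (Fin d → ℝ) → (Fin d → ℝ), R = fun p => p - x - S p • e := ⟨_, rfl⟩
  have S0 : S x = 0 := by simp [hS]
  have R0 : R x = 0 := by simp [hR, S0]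
  have Sadd : ∀ p t, S (p + t • e) = S p + t := fun p t => by
    have : p + t • e - x = (p - x) + t • e := by abel
    simp only [hS, this, add_dotProduct, smul_dotProduct, smul_eq_mul]
    field_simp
  have Radd : ∀ p (t : ℝ), R (p + t • e) = R p := fun p t => by
    simp only [hR, Sadd]; module
  have Scd : ContDiff ℝ 2 S := by
    rw [hS]; simp only [dotProduct]; fun_prop
  have Rcd : ContDiff ℝ 2 R := by
    rw [hR]; fun_prop
  have Qcd : ContDiff ℝ 2 (fun p => R p ⬝ᵥ R p) := by
    have : ∀ i, ContDiff ℝ 2 (fun p => R p i) := fun i => contDiff_pi.1 Rcd i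
    simp only [dotProduct]
    exact ContDiff.sum fun i _ => (this i).mul (this i)
  have hRdec : ∀ p, p = x + S p • e + R p := fun p => by simp only [hR]; module
  have hyx : y = x + (1:ℝ) • e := by simp [he]
  have S1 : S y = 1 := by rw [hyx, Sadd, S0]; simp
  set z := a • x + b • y with hz
  have hzΩ : z ∈ Ω := hΩc hx hy ha hb hab
  have hzx : z = x + b • e := by
    obtain rfl : a = 1 - b := by linarith
    rw [hz, he]; module
  have Sz : S z = b := by rw [hzx, Sadd, S0]; simp
  have Rz : R z = 0 := by rw [hzx, Radd, R0]
  obtain ⟨w, hw⟩ : ∃ w : (Fin d → ℝ) → ℝ, w = fun p => u p - u x - S p * (u y - u x) := ⟨_, rfl⟩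
  have hwc : ContinuousOn w Ω := by
    rw [hw]
    exact (hu.sub continuousOn_const).sub (Scd.continuous.continuousOn.mul continuousOn_const)
  have hm : 0 < w z := by
    simp only [hw, Sz]
    obtain rfl : a = 1 - b := by linarith
    linarith
  set m := w z with hmdef
  have hwx : w x = 0 := by simp [hw, S0]
  have hwy : w y = 0 := by simp [hw, S1]
  have near : ∀ p ∈ Ω, w p = 0 → ∃ δ > 0, ∀ q, dist q p ≤ δ → w q < m / 4 := by
    intro p hp hp0
    have : ∀ᶠ q in nhds p, w q < m / 4 :=
      (hwc.continuousAt (hΩo.mem_nhds hp)).eventually_lt continuousAt_const (by rw [hp0]; linarith)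
    obtain ⟨δ, hδ, h⟩ := Metric.eventually_nhds_iff.1 this
    exact ⟨δ / 2, by positivity, fun q hq => h (by linarith)⟩
  obtain ⟨δ1, hδ1, n1⟩ := near x hx hwx
  obtain ⟨δ2, hδ2, n2⟩ := near y hy hwy
  have hseg : IsCompact (segment ℝ x y) := by
    rw [segment_eq_image_lineMap]
    exact isCompact_Icc.image AffineMap.lineMap_continuous
  obtain ⟨δ3, hδ3, n3⟩ := hseg.exists_cthickening_subset_open hΩo (hΩc.segment_subset hx hy)
  set δ := min δ1 (min δ2 δ3) with hδdef
  have hδ : 0 < δ := by positivity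
  have hRn : ∀ p, R p ⬝ᵥ R p ≤ δ ^ 2 → ‖R p‖ ≤ δ := fun p hp =>
    abs_le_of_sq_le_sq' ((norm_sq_le_dot _).trans hp) hδ.le |>.2
  set K : Set (Fin d → ℝ) := {p | 0 ≤ S p ∧ S p ≤ 1 ∧ R p ⬝ᵥ R p ≤ δ ^ 2} with hK
  have hKΩ : K ⊆ Ω := by
    rintro p ⟨h0, h1, h2⟩
    apply n3
    refine Metric.mem_cthickening_of_dist_le p (x + S p • e) δ3 _ ?_ ?_
    · rw [segment_eq_image']; exact ⟨S p, ⟨h0, h1⟩, by simp [he]⟩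
    · rw [dist_eq_norm]
      have : p - (x + S p • e) = R p := by simp only [hR]; module
      rw [this]
      exact (hRn p h2).trans ((min_le_right _ _).trans (min_le_right _ _))
  have hKc : IsCompact K := by
    refine Metric.isCompact_of_isClosed_isBounded ?_ (hΩb.subset hKΩ)
    have := Scd.continuous
    have := Qcd.continuous
    exact (isClosed_le continuous_const ‹Continuous S›).inter
      ((isClosed_le ‹Continuous S› continuous_const).inter
        (isClosed_le ‹Continuous fun p => R p ⬝ᵥ R p› continuous_const))
  have hzK : z ∈ K := by
    refine ⟨by rw [Sz]; exact hb, by rw [Sz]; linarith, by rw [Rz]; simp; positivity⟩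
  obtain ⟨M, hM⟩ := (hKc.image_of_continuousOn (hwc.mono hKΩ)).bddAbove
  have hM' : ∀ p ∈ K, w p ≤ M := fun p hp => hM ⟨p, hp, rfl⟩
  have hM0 : m ≤ M := hM' z hzK
  set N := (M + m) / δ ^ 2 with hN
  have hN0 : 0 ≤ N := div_nonneg (by linarith) (by positivity)
  have hNδ : N * δ ^ 2 = M + m := by rw [hN]; field_simp
  let φ : (Fin d → ℝ) → ℝ := fun p =>
    u x + S p * (u y - u x) - m / 4 * (S p) ^ 2 + N * (R p ⬝ᵥ R p)
  have hφ : ContDiff ℝ 2 φ := by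
    have h1 : ContDiff ℝ 2 (fun p => S p * (u y - u x)) := Scd.mul contDiff_const
    have h2 : ContDiff ℝ 2 (fun p => m / 4 * (S p) ^ 2) := contDiff_const.mul (Scd.pow 2)
    have h3 : ContDiff ℝ 2 (fun p => N * (R p ⬝ᵥ R p)) := contDiff_const.mul Qcd
    exact ((contDiff_const.add h1).sub h2).add h3
  have hF : ∀ p, u p - φ p = w p + m / 4 * (S p) ^ 2 - N * (R p ⬝ᵥ R p) := fun p => by
    simp only [φ, hw]; ring
  have hFc : ContinuousOn (fun p => u p - φ p) K :=
    (hu.mono hKΩ).sub hφ.continuous.continuousOn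
  obtain ⟨p, hpK, hpmax⟩ := hKc.exists_isMaxOn ⟨z, hzK⟩ hFc
  have hpΩ := hKΩ hpK
  have hge : m ≤ u p - φ p := by
    have h1 : u z - φ z ≤ u p - φ p := hpmax hzK
    rw [hF z, Sz, Rz] at h1
    simp only [dotProduct_zero, mul_zero, sub_zero] at h1
    nlinarith [sq_nonneg b]
  obtain ⟨k0, k1, k2⟩ := hpK
  have hQ0 : 0 ≤ R p ⬝ᵥ R p := Finset.sum_nonneg fun i _ => mul_self_nonneg _
  rw [hF] at hge
  have hNQ : 0 ≤ N * (R p ⬝ᵥ R p) := mul_nonneg hN0 hQ0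
  have l0 : 0 < S p := by
    refine lt_of_le_of_ne k0 fun h => ?_
    have : w p < m / 4 := n1 p (by
      have h' : p - x = R p := by simp [hR, ← h]
      rw [dist_eq_norm, h']
      exact (hRn p k2).trans (min_le_left _ _))
    rw [← h] at hge
    nlinarith
  have l1 : S p < 1 := by
    refine lt_of_le_of_ne k1 fun h => ?_
    have : w p < m / 4 := n2 p (by
      have h' : p - y = R p := by simp [hR, h, he]
      rw [dist_eq_norm, h']
      exact (hRn p k2).trans ((min_le_right _ _).trans (min_le_left _ _)))
    rw [h] at hge
    nlinarith
  have l2 : R p ⬝ᵥ R p < δ ^ 2 := by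
    refine lt_of_le_of_ne k2 fun h => ?_
    have := hM' p ⟨k0, k1, k2⟩
    rw [h, hNδ] at hge
    have : S p ^ 2 ≤ 1 := by nlinarith
    nlinarith
  have hKn : K ∈ nhds p := by
    filter_upwards [continuousAt_const.eventually_lt Scd.continuous.continuousAt l0,
      Scd.continuous.continuousAt.eventually_lt continuousAt_const l1,
      Qcd.continuous.continuousAt.eventually_lt continuousAt_const l2] with q h1 h2 h3
    exact ⟨h1.le, h2.le, h3.le⟩
  have hloc : IsLocalMaxOn (fun q => u q - φ q) Ω p :=
    (hpmax.isLocalMax hKn).on Ω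
  have hpsd := hsub φ hφ.contDiffOn p hpΩ hloc
  have hnn := hpsd.dotProduct_mulVec_nonneg e
  rw [star_trivial] at hnn
  have hlim : e ⬝ᵥ hessianM d φ p *ᵥ e = -(m / 2) := by
    refine tendsto_nhds_unique (second_diff hφ.contDiffAt e) ?_
    refine Filter.Tendsto.congr' ?_ tendsto_const_nhds
    filter_upwards [self_mem_nhdsWithin] with t ht
    have ht0 : (t : ℝ) ≠ 0 := ne_of_gt ht
    have e2 : p - t • e = p + (-t) • e := by module
    simp only [e2, φ, Sadd, Radd]
    field_simp
    ring
  linarith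

/-- u is a viscosity solution of the Bellman equation iff u is convex and a viscosity
solution of the Monge–Ampère equation on the set of convex functions. -/
theorem stmt_17 (d : ℕ) (hd : 2 ≤ d) (Ω : Set (Fin d → ℝ)) (hΩo : IsOpen Ω)
    (hΩb : Bornology.IsBounded Ω) (hΩc : Convex ℝ Ω)
    (f : (Fin d → ℝ) → ℝ) (hfc : ContinuousOn f Ω) (hf0 : ∀ x ∈ Ω, 0 ≤ f x)
    (u : (Fin d → ℝ) → ℝ) :
    (UpperSemicontinuousOn u Ω ∧
      (∀ φ : (Fin d → ℝ) → ℝ, ContDiffOn ℝ 2 φ Ω →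
        ∀ x ∈ Ω, IsLocalMaxOn (fun y => u y - φ y) Ω x →
          bellman d (hessianM d φ x) (f x) ≤ 0) ∧
     LowerSemicontinuousOn u Ω ∧
      (∀ φ : (Fin d → ℝ) → ℝ, ContDiffOn ℝ 2 φ Ω →
        ∀ x ∈ Ω, IsLocalMinOn (fun y => u y - φ y) Ω x →
          0 ≤ bellman d (hessianM d φ x) (f x)))
    ↔
    (ConvexOn ℝ Ω u ∧
      (∀ φ : (Fin d → ℝ) → ℝ, ContDiffOn ℝ 2 φ Ω → ConvexOn ℝ Ω φ →
        ∀ x ∈ Ω, IsLocalMaxOn (fun y => u y - φ y) Ω x →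
          MAop d (hessianM d φ x) (f x) ≤ 0) ∧
      (∀ φ : (Fin d → ℝ) → ℝ, ContDiffOn ℝ 2 φ Ω → ConvexOn ℝ Ω φ →
        ∀ x ∈ Ω, IsLocalMinOn (fun y => u y - φ y) Ω x →
          0 ≤ MAop d (hessianM d φ x) (f x))) := by
  constructor
  · rintro ⟨husc, hsub, hlsc, hsup⟩
    have hcont : ContinuousOn u Ω := continuousOn_iff_lower_upperSemicontinuousOn.2 ⟨hlsc, husc⟩
    refine ⟨?_, ?_, ?_⟩
    · refine convex_of_sub hΩo hΩb hΩc hcont fun φ hφ x hx hloc => ?_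
      exact psd_of_bellman hd (hess_herm (hφ.contDiffAt (hΩo.mem_nhds hx))) (hsub φ hφ x hx hloc)
    · intro φ hφ _ x hx hloc
      exact MA_le_of_bellman hd (hess_herm (hφ.contDiffAt (hΩo.mem_nhds hx))) (hf0 x hx)
        (hsub φ hφ x hx hloc)
    · intro φ hφ hφc x hx hloc
      refine MA_ge_of_bellman hd ?_ (hf0 x hx) (hsup φ hφ x hx hloc)
      refine psd_of_sd (hφ.contDiffAt (hΩo.mem_nhds hx)) fun v => ?_
      filter_upwards [convex_sd hΩo hφc hx (P := fun _ => True) (by simp) v] with t ht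
      exact ht.1
  · rintro ⟨hconv, hsub, hsup⟩
    have hcont : ContinuousOn u Ω := hconv.continuousOn hΩo
    refine ⟨hcont.upperSemicontinuousOn, ?_, hcont.lowerSemicontinuousOn, ?_⟩
    · intro φ hφ x hx hloc
      have hφx := hφ.contDiffAt (hΩo.mem_nhds hx)
      have hl : ∀ᶠ y in nhds x, u y - φ y ≤ u x - φ x := hloc.isLocalMax (hΩo.mem_nhds hx)
      have hpsd : (hessianM d φ x).PosSemidef := by
        refine psd_of_sd hφx fun v => ?_
        filter_upwards [convex_sd hΩo hconv hx hl v] with t ht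
        linarith [ht.1, ht.2.1, ht.2.2]
      refine le_of_forall_pos_le_add fun ε hε => ?_
      rw [← bellman_shift hd]
      have hpsd' : (hessianM d φ x + ε • 1).PosSemidef :=
        hpsd.add (Matrix.PosSemidef.one.smul hε.le)
      refine bellman_le_of_MA hd hpsd' (hf0 x hx) ?_
      have := hsub (qfun d (φ x) (fderiv ℝ φ x) (hessianM d φ x + ε • 1) x)
        (qfun_contDiff ..).contDiffOn (qfun_convex _ _ hpsd' _ hΩc) x hx ?_
      · rwa [qfun_hess _ _ hpsd'.1] at this
      · refine IsLocalMax.on ?_ Ω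
        filter_upwards [hl, (qfun_touch hφx hε).1] with y h1 h2
        rw [qfun_self]
        linarith
    · intro φ hφ x hx hloc
      have hφx := hφ.contDiffAt (hΩo.mem_nhds hx)
      have hl : ∀ᶠ y in nhds x, u x - φ x ≤ u y - φ y := hloc.isLocalMin (hΩo.mem_nhds hx)
      by_contra! hneg
      set ε := -(bellman d (hessianM d φ x) (f x)) / 2 with hε
      have hε0 : 0 < ε := by linarith
      have hH : bellman d (hessianM d φ x + (-ε) • 1) (f x) ≤ -ε := by
        rw [bellman_shift hd]; linarith
      have hherm : (hessianM d φ x + (-ε) • 1).IsHermitian :=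
        (hess_herm hφx).add (Matrix.isHermitian_one.smul (IsSelfAdjoint.all _))
      have hpsd' := psd_of_bellman hd hherm (hH.trans (by linarith))
      have := hsup (qfun d (φ x) (fderiv ℝ φ x) (hessianM d φ x + (-ε) • 1) x)
        (qfun_contDiff ..).contDiffOn (qfun_convex _ _ hpsd' _ hΩc) x hx ?_
      · rw [qfun_hess _ _ hpsd'.1] at this
        have := bellman_ge_of_MA hd hpsd' this (hf0 x hx)
        linarith
      · refine IsLocalMin.on ?_ Ω
        filter_upwards [hl, (qfun_touch hφx hε0).2] with y h1 h2
        rw [qfun_self]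
        linarith
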